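/- Let g : ℝ → ℝ be operator monotone decreasing on (0,∞), and let A, B be positive definite complex matrices with s·A ≤ B ≤ t·A for some scalars 0 < s ≤ t with s·t ≥ 1. Then (2/(√s+√t))·g(A ! B) ≤ g(A ♯ B). -/

import Mathlib

open Matrix ComplexOrder

/-- Loewner order: `A ≤ B` iff `B - A` is positive semidefinite. -/
def LoewnerLE {n : Type} [Fintype n] (A B : Matrix n n ℂ) : Prop := (B - A).PosSemidef

/-- The positive square root of a (Hermitian) matrix, via the continuous functional calculus. -/
noncomputable def msqrt {n : Type} [Fintype n] [DecidableEq n] (A : Matrix n n ℂ) :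
    Matrix n n ℂ := cfc Real.sqrt A

/-- The arithmetic mean `A ∇ B = (A + B)/2`. -/
noncomputable def amean {n : Type} [Fintype n] [DecidableEq n] (A B : Matrix n n ℂ) :
    Matrix n n ℂ := (2 : ℝ)⁻¹ • (A + B)

/-- The harmonic mean `A ! B = ((A⁻¹ + B⁻¹)/2)⁻¹`. -/
noncomputable def hmean {n : Type} [Fintype n] [DecidableEq n] (A B : Matrix n n ℂ) :
    Matrix n n ℂ := ((2 : ℝ)⁻¹ • (A⁻¹ + B⁻¹))⁻¹

/-- The geometric mean `A ♯ B = A^(1/2) (A^(-1/2) B A^(-1/2))^(1/2) A^(1/2)`. -/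
noncomputable def gmean {n : Type} [Fintype n] [DecidableEq n] (A B : Matrix n n ℂ) :
    Matrix n n ℂ := msqrt A * msqrt ((msqrt A)⁻¹ * B * (msqrt A)⁻¹) * msqrt A

/-- `f : ℝ → ℝ` is operator monotone on `[0,∞)`: it is continuous and nonnegative on `[0,∞)`
and monotone on positive-semidefinite complex matrices of every finite size, with `f` applied
via the continuous functional calculus. -/
def OpMonotone (f : ℝ → ℝ) : Prop :=
  ContinuousOn f (Set.Ici 0) ∧ (∀ x : ℝ, 0 ≤ x → 0 ≤ f x) ∧
    ∀ (k : Type) [Fintype k] [DecidableEq k] (X Y : Matrix k k ℂ),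
      X.PosSemidef → LoewnerLE X Y → LoewnerLE (cfc f X) (cfc f Y)

/-- `g : ℝ → ℝ` is operator monotone decreasing on `(0,∞)`: it is continuous and nonnegative on
`(0,∞)` and antitone on positive-definite complex matrices of every finite size, with `g` applied
via the continuous functional calculus. -/
def OpAntitone (g : ℝ → ℝ) : Prop :=
  ContinuousOn g (Set.Ioi 0) ∧ (∀ x : ℝ, 0 < x → 0 ≤ g x) ∧
    ∀ (k : Type) [Fintype k] [DecidableEq k] (X Y : Matrix k k ℂ),
      X.PosDef → Y.PosDef → LoewnerLE X Y → LoewnerLE (cfc g Y) (cfc g X)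

/-!
The function `h x = g x⁻¹` is operator monotone on positive definite matrices. For a unit vector
`w` and `p = w w*`, the right-hand side of the pinching inequality
`X ≤ (1 + ε) p X p + (1 + ε⁻¹) (1 - p) X (1 - p)` has `w` as an eigenvector, so applying `h` and
letting `ε → 0` yields Jensen's inequality `⟨w, h(X) w⟩ ≤ h ⟨w, X w⟩`. For diagonal `2 × 2`
matrices this is the concavity of `h`. As `h` is also nonnegative, `h x / x` is decreasing, that is,
`g x * x` is increasing, whence `l⁻¹ g(H) ≤ g(l H)` for `l ≥ 1`.

Both means have the form `A^(1/2) f(X) A^(1/2)` with `X = A^(-1/2) B A^(-1/2)`, whose spectrum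
lies in `[s, t]`. For `x` in that interval `(√x - √s) (√t - √x) ≥ 0` and `s t ≥ 1` give
`√x ≤ l * (2 x / (1 + x))` with `l = (√s + √t) / 2`, so `A ♯ B ≤ l (A ! B)`, and `g` reverses
this inequality.
-/

open Set Filter
open scoped MatrixOrder Topology

lemma antitoneOn_div_id_of_concaveOn_of_nonneg {f : ℝ → ℝ} (hf : ConcaveOn ℝ (Ioi 0) f)
    (hf₀ : ∀ x, 0 < x → 0 ≤ f x) : AntitoneOn (fun x => f x / x) (Ioi 0) := by
  intro u (hu : 0 < u) v (hv : 0 < v) huv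
  suffices u * f v ≤ v * f u by
    rw [div_le_div_iff₀ hv hu]
    linarith
  rcases huv.eq_or_lt with rfl | huv
  · rfl
  have hsecant : ∀ δ ∈ Ioo 0 u, (u - δ) * f v ≤ (v - δ) * f u := by
    rintro δ ⟨hδ, hδu⟩
    have hconv := hf.neg.secant_mono_aux1 hδ hv hδu huv
    simp only [Pi.neg_apply] at hconv
    linarith [mul_nonneg (sub_nonneg.2 huv.le) (hf₀ δ hδ)]
  have h₀ : (0 : ℝ) ∈ closure (Ioo 0 u) := by
    rw [closure_Ioo hu.ne]
    exact left_mem_Icc.2 hu.le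
  simpa using le_on_closure hsecant (by fun_prop) (by fun_prop) h₀

lemma one_le_sqrt_mul_sqrt {s t : ℝ} (hs : 0 ≤ s) (hst : 1 ≤ s * t) : 1 ≤ √s * √t := by
  rw [← Real.sqrt_mul hs]
  exact Real.one_le_sqrt.2 hst

lemma one_le_sqrt_add_sqrt_div_two {s t : ℝ} (hs : 0 ≤ s) (hst : 1 ≤ s * t) :
    1 ≤ (√s + √t) / 2 := by
  nlinarith [one_le_sqrt_mul_sqrt hs hst, sq_nonneg (√s - √t), Real.sqrt_nonneg s,
    Real.sqrt_nonneg t]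

lemma sqrt_le_mul_two_mul_div_one_add {s t x : ℝ} (hs : 0 ≤ s) (hst : 1 ≤ s * t)
    (hx : x ∈ Icc s t) : √x ≤ (√s + √t) / 2 * (2 * x / (1 + x)) := by
  have hx₀ : 0 ≤ x := hs.trans hx.1
  have hsx : √s ≤ √x := Real.sqrt_le_sqrt hx.1
  have hxt : √x ≤ √t := Real.sqrt_le_sqrt hx.2
  have hchord : 1 + x ≤ (√s + √t) * √x := by
    linarith [one_le_sqrt_mul_sqrt hs hst, mul_nonneg (sub_nonneg.2 hsx) (sub_nonneg.2 hxt),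
      Real.mul_self_sqrt hx₀]
  calc √x = √x * (1 + x) / (1 + x) := by field_simp
    _ ≤ √x * ((√s + √t) * √x) / (1 + x) := by gcongr
    _ = (√s + √t) / 2 * (2 * (√x * √x) / (1 + x)) := by ring
    _ = (√s + √t) / 2 * (2 * x / (1 + x)) := by rw [Real.mul_self_sqrt hx₀]

lemma le_smul_conj_add_smul_conj_one_sub {R : Type*} [Ring R] [PartialOrder R] [StarRing R]
    [StarOrderedRing R] [Algebra ℝ R] [StarModule ℝ R] {x p : R} (hx : 0 ≤ x)
    (hp : IsSelfAdjoint p) {ε : ℝ} (hε : 0 < ε) :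
    x ≤ (1 + ε) • (p * x * p) + (1 + ε⁻¹) • ((1 - p) * x * (1 - p)) := by
  let d := ε • p - (1 - p)
  have hd : IsSelfAdjoint d := ((IsSelfAdjoint.all ε).smul hp).sub ((IsSelfAdjoint.one R).sub hp)
  have hgap : (1 + ε) • (p * x * p) + (1 + ε⁻¹) • ((1 - p) * x * (1 - p)) - x =
      ε⁻¹ • (d * x * d) := by
    simp only [d, sub_mul, mul_sub, one_mul, mul_one, smul_mul_assoc, mul_smul_comm]
    match_scalars <;> field_simp <;> ring
  rw [← sub_nonneg, hgap]
  exact smul_nonneg (inv_nonneg.2 hε.le) (hd.conjugate_nonneg hx)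

section Matrix

variable {n : Type*} [Fintype n] [DecidableEq n]

lemma continuousOn_real_spectrum (f : ℝ → ℝ) (X : Matrix n n ℂ) :
    ContinuousOn f (spectrum ℝ X) :=
  Matrix.finite_real_spectrum.continuousOn f

lemma cfc_mulVec_of_mulVec_eq_smul (f : ℝ → ℝ) {X : Matrix n n ℂ} (hX : X.IsHermitian)
    {v : n → ℂ} {μ : ℝ} (hv : X *ᵥ v = μ • v) : cfc f X *ᵥ v = f μ • v := by
  have hXsa : IsSelfAdjoint X := hX
  let q : ℝ → ℝ := fun x => (f x - f μ) / (x - μ)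
  have hfactor : ∀ x, f x = q x * (x - μ) + f μ := fun x => by
    rcases eq_or_ne x μ with rfl | hx
    · simp
    · simp [q, div_mul_cancel₀ _ (sub_ne_zero.2 hx)]
  have hcfc : cfc f X = cfc q X * (X - μ • 1) + f μ • 1 := by
    conv_lhs => rw [funext hfactor]
    rw [cfc_add_const _ _ X (continuousOn_real_spectrum _ X),
      cfc_mul q _ X (continuousOn_real_spectrum _ X), cfc_sub .., cfc_id' ℝ X, cfc_const ..,
      Algebra.algebraMap_eq_smul_one, Algebra.algebraMap_eq_smul_one]
  rw [hcfc, add_mulVec, ← mulVec_mulVec, sub_mulVec, hv]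
  simp [smul_mulVec]

lemma cfc_diagonal (f : ℝ → ℝ) (d : n → ℝ) :
    cfc f (diagonal fun i => (d i : ℂ)) = diagonal fun i => (f (d i) : ℂ) := by
  have hd : (diagonal fun i => (d i : ℂ)).IsHermitian :=
    isHermitian_diagonal_of_self_adjoint _ (by ext; simp)
  refine ext_of_mulVec_single fun i => ?_
  rw [cfc_mulVec_of_mulVec_eq_smul f hd (μ := d i)] <;> ext <;> simp [Pi.single_apply]

lemma smul_conj_add_smul_conj_one_sub_mulVec {X : Matrix n n ℂ} {w : n → ℂ}
    (hw : star w ⬝ᵥ w = 1) (a b : ℝ) {m : ℝ} (hm : star w ⬝ᵥ X *ᵥ w = m) :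
    (a • (vecMulVec w (star w) * X * vecMulVec w (star w)) +
      b • ((1 - vecMulVec w (star w)) * X * (1 - vecMulVec w (star w)))) *ᵥ w = (a * m) • w := by
  have hP : vecMulVec w (star w) *ᵥ w = w := by simp [vecMulVec_mulVec, hw]
  have hPX : vecMulVec w (star w) *ᵥ (X *ᵥ w) = m • w := by
    rw [vecMulVec_mulVec, hm]
    ext i
    simp [mul_comm]
  simp only [add_mulVec, smul_mulVec, ← mulVec_mulVec, sub_mulVec, one_mulVec, hP, hPX, sub_self,
    mulVec_zero, smul_zero, add_zero, smul_smul]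

lemma posDef_cfc {f : ℝ → ℝ} {X : Matrix n n ℂ} (hX : X.IsHermitian)
    (hf : ∀ x ∈ spectrum ℝ X, 0 < f x) : (cfc f X).PosDef := by
  rw [← isStrictlyPositive_iff_posDef, IsStrictlyPositive.iff_of_unital]
  exact ⟨cfc_nonneg fun x hx => (hf x hx).le,
    (isUnit_cfc_iff f X (continuousOn_real_spectrum f X) hX).2 fun x hx => (hf x hx).ne'⟩

lemma cfc_comp_inv_eq_cfc_inv (f : ℝ → ℝ) {X : Matrix n n ℂ} (hX : X.PosDef) :
    cfc (fun x => f x⁻¹) X = cfc f X⁻¹ := by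
  have hcomp := cfc_comp_inv f hX.isUnit.unit ((finite_real_spectrum.image _).continuousOn f) hX.1
  rwa [coe_units_inv] at hcomp

open scoped Matrix.Norms.L2Operator in
lemma inv_le_inv_of_posDef {X Y : Matrix n n ℂ} (hX : X.PosDef) (hXY : X ≤ Y) : Y⁻¹ ≤ X⁻¹ := by
  simpa only [nonsing_inv_eq_ringInverse] using
    CStarAlgebra.ringInverse_le_ringInverse hXY hX.isStrictlyPositive

end Matrix

lemma posDef_of_posDef_of_le {n : Type*} {X Y : Matrix n n ℂ} (hX : X.PosDef) (hXY : X ≤ Y) :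
    Y.PosDef := by
  simpa using hX.add_posSemidef (le_iff.1 hXY)

namespace OpAntitone

variable {g : ℝ → ℝ}

section Matrix

variable {n : Type} [Fintype n] [DecidableEq n]

lemma cfc_le_cfc (hg : OpAntitone g) {X Y : Matrix n n ℂ} (hX : X.PosDef) (hXY : X ≤ Y) :
    cfc g Y ≤ cfc g X :=
  hg.2.2 n X Y hX (posDef_of_posDef_of_le hX hXY) hXY

lemma cfc_comp_inv_le_cfc_comp_inv (hg : OpAntitone g) {X Y : Matrix n n ℂ} (hX : X.PosDef)
    (hXY : X ≤ Y) : cfc (fun x => g x⁻¹) X ≤ cfc (fun x => g x⁻¹) Y := by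
  have hY := posDef_of_posDef_of_le hX hXY
  rw [cfc_comp_inv_eq_cfc_inv g hX, cfc_comp_inv_eq_cfc_inv g hY]
  exact hg.cfc_le_cfc hY.inv (inv_le_inv_of_posDef hX hXY)

lemma continuousOn_comp_inv (hg : OpAntitone g) : ContinuousOn (fun x => g x⁻¹) (Ioi 0) :=
  hg.1.comp (continuousOn_inv₀.mono fun _ hx => ne_of_gt hx)
    fun _ hx => mem_Ioi.2 (inv_pos.2 hx)

lemma re_dotProduct_cfc_comp_inv_le (hg : OpAntitone g) {X : Matrix n n ℂ} (hX : X.PosDef)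
    {w : n → ℂ} (hw : star w ⬝ᵥ w = 1) :
    (star w ⬝ᵥ cfc (fun x => g x⁻¹) X *ᵥ w).re ≤ g (star w ⬝ᵥ X *ᵥ w).re⁻¹ := by
  set m := (star w ⬝ᵥ X *ᵥ w).re
  have hm : star w ⬝ᵥ X *ᵥ w = m :=
    Complex.ext rfl (hX.1.im_star_dotProduct_mulVec_self w)
  have hm_pos : 0 < m := hX.re_dotProduct_pos (x := w) (by rintro rfl; simp at hw)
  have hbound : ∀ ε > 0, (star w ⬝ᵥ cfc (fun x => g x⁻¹) X *ᵥ w).re ≤ g ((1 + ε) * m)⁻¹ := by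
    intro ε hε
    have hP : IsSelfAdjoint (vecMulVec w (star w)) := (posSemidef_vecMulVec_self_star w).1
    have hXZ := le_smul_conj_add_smul_conj_one_sub hX.posSemidef.nonneg hP hε
    have hZ := posDef_of_posDef_of_le hX hXZ
    have h := (le_iff.1 (hg.cfc_comp_inv_le_cfc_comp_inv hX hXZ)).re_dotProduct_nonneg w
    have hcfc := cfc_mulVec_of_mulVec_eq_smul (fun x => g x⁻¹) hZ.1
      (smul_conj_add_smul_conj_one_sub_mulVec hw (1 + ε) (1 + ε⁻¹) hm)
    rw [sub_mulVec, hcfc] at h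
    simpa [hw, dotProduct_sub] using h
  have hlim : Tendsto (fun ε : ℝ => g ((1 + ε) * m)⁻¹) (𝓝[>] 0) (𝓝 (g m⁻¹)) := by
    have hcont : ContinuousAt (fun ε : ℝ => g ((1 + ε) * m)⁻¹) 0 :=
      ContinuousAt.comp (f := fun ε : ℝ => (1 + ε) * m) (g := fun x => g x⁻¹)
        (hg.continuousOn_comp_inv.continuousAt (Ioi_mem_nhds (by simpa using hm_pos))) (by fun_prop)
    simpa using hcont.tendsto.mono_left nhdsWithin_le_nhds
  exact ge_of_tendsto hlim (eventually_mem_nhdsWithin.mono hbound)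

end Matrix

lemma concaveOn_comp_inv (hg : OpAntitone g) : ConcaveOn ℝ (Ioi 0) fun x => g x⁻¹ := by
  refine ⟨convex_Ioi 0, fun u hu v hv p q hp hq hpq => ?_⟩
  let d : Fin 2 → ℝ := ![u, v]
  let w : Fin 2 → ℂ := ![(√p : ℂ), (√q : ℂ)]
  have hd : (diagonal fun i => (d i : ℂ)).PosDef :=
    .diagonal fun i => by fin_cases i <;> simpa [d]
  have hquad : ∀ e : Fin 2 → ℝ,
      star w ⬝ᵥ diagonal (fun i => (e i : ℂ)) *ᵥ w = ((p * e 0 + q * e 1 : ℝ) : ℂ) := by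
    intro e
    have hp_sqrt : (√p : ℂ) * √p = p := by exact_mod_cast Real.mul_self_sqrt hp
    have hq_sqrt : (√q : ℂ) * √q = q := by exact_mod_cast Real.mul_self_sqrt hq
    simp only [dotProduct, Fin.sum_univ_two, mulVec_diagonal, w, Pi.star_apply, cons_val_zero,
      cons_val_one, RCLike.star_def, Complex.conj_ofReal, Complex.ofReal_add, Complex.ofReal_mul]
    linear_combination (e 0 : ℂ) * hp_sqrt + (e 1 : ℂ) * hq_sqrt
  have hw : star w ⬝ᵥ w = 1 := by simpa [hpq] using hquad 1
  have hjensen := hg.re_dotProduct_cfc_comp_inv_le hd hw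
  rw [cfc_diagonal, hquad, hquad] at hjensen
  exact hjensen

lemma monotoneOn_mul_id (hg : OpAntitone g) : MonotoneOn (fun x => g x * x) (Ioi 0) := by
  intro x hx y hy hxy
  have hanti := antitoneOn_div_id_of_concaveOn_of_nonneg hg.concaveOn_comp_inv
    fun x hx => hg.2.1 _ (inv_pos.2 hx)
  simpa using hanti (mem_Ioi.2 (inv_pos.2 hy)) (mem_Ioi.2 (inv_pos.2 hx)) (inv_anti₀ hx hxy)

lemma inv_smul_cfc_le_cfc_smul {n : Type} [Fintype n] [DecidableEq n] (hg : OpAntitone g)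
    {X : Matrix n n ℂ} (hX : X.PosDef) {l : ℝ} (hl : 1 ≤ l) :
    l⁻¹ • cfc g X ≤ cfc g (l • X) := by
  have hXsa : IsSelfAdjoint X := hX.1
  have hl₀ : 0 < l := zero_lt_one.trans_le hl
  have hscalar : ∀ x ∈ spectrum ℝ X, l⁻¹ * g x ≤ g (l * x) := by
    intro x hx
    have hx₀ : 0 < x := hX.isStrictlyPositive.spectrum_pos hx
    have hmono : g x * x ≤ g (l * x) * (l * x) :=
      hg.monotoneOn_mul_id hx₀ (mul_pos hl₀ hx₀) (le_mul_of_one_le_left hx₀.le hl)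
    rw [inv_mul_le_iff₀ hl₀]
    exact le_of_mul_le_mul_right (by linarith) hx₀
  rw [← cfc_comp_const_mul l g X ((finite_real_spectrum.image _).continuousOn _),
    ← cfc_const_mul _ _ _ (continuousOn_real_spectrum _ _)]
  exact cfc_mono hscalar (continuousOn_real_spectrum _ _) (continuousOn_real_spectrum _ _)

end OpAntitone

lemma loewnerLE_iff_le {n : Type} [Fintype n] {A B : Matrix n n ℂ} : LoewnerLE A B ↔ A ≤ B :=
  le_iff.symm

section Means

variable {n : Type} [Fintype n] [DecidableEq n] {A B : Matrix n n ℂ}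

lemma isHermitian_msqrt (A : Matrix n n ℂ) : (msqrt A).IsHermitian :=
  cfc_predicate Real.sqrt A

lemma posDef_msqrt (hA : A.PosDef) : (msqrt A).PosDef :=
  posDef_cfc hA.1 fun _ hx => Real.sqrt_pos.2 (hA.isStrictlyPositive.spectrum_pos hx)

lemma isUnit_msqrt (hA : A.PosDef) : IsUnit (msqrt A) :=
  (posDef_msqrt hA).isUnit

lemma msqrt_mul_msqrt (hA : A.PosSemidef) : msqrt A * msqrt A = A := by
  rw [msqrt, ← cfcₙ_eq_cfc, ← CFC.sqrt_eq_real_sqrt A hA.nonneg]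
  exact CFC.sqrt_mul_sqrt_self A hA.nonneg

lemma hmean_mul_mul {C D : Matrix n n ℂ} (hC : IsUnit C) (hD : IsUnit D) :
    hmean (C * A * D) (C * B * D) = C * hmean A B * D := by
  have hinv : (2 : ℝ)⁻¹ • ((C * A * D)⁻¹ + (C * B * D)⁻¹) =
      D⁻¹ * ((2 : ℝ)⁻¹ • (A⁻¹ + B⁻¹)) * C⁻¹ := by
    simp only [Matrix.mul_inv_rev, mul_smul_comm, smul_mul_assoc, mul_add, add_mul, mul_assoc]
  rw [hmean, hinv, Matrix.mul_inv_rev, Matrix.mul_inv_rev,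
    nonsing_inv_nonsing_inv _ ((isUnit_iff_isUnit_det C).1 hC),
    nonsing_inv_nonsing_inv _ ((isUnit_iff_isUnit_det D).1 hD), ← mul_assoc, hmean]

lemma hmean_one_left (hA : A.PosDef) : hmean 1 A = cfc (fun x : ℝ => 2 * x / (1 + x)) A := by
  have hAsa : IsSelfAdjoint A := hA.1
  have hAinv : IsSelfAdjoint A⁻¹ := hA.inv.1
  have hamean : (2 : ℝ)⁻¹ • (1 + A⁻¹) = cfc (fun x : ℝ => 2⁻¹ * (1 + x⁻¹)) A := by
    rw [cfc_const_mul _ _ A (continuousOn_real_spectrum _ A),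
      cfc_const_add 1 _ A (continuousOn_real_spectrum _ A),
      cfc_comp_inv_eq_cfc_inv (fun x => x) hA, cfc_id' ℝ A⁻¹, map_one]
  rw [hmean, inv_one, hamean]
  refine inv_eq_right_inv ?_
  rw [← cfc_mul _ _ A (continuousOn_real_spectrum _ A) (continuousOn_real_spectrum _ A),
    ← cfc_one ℝ A]
  refine cfc_congr fun x hx => ?_
  have hx₀ : 0 < x := hA.isStrictlyPositive.spectrum_pos hx
  simp only [Pi.one_apply]
  field_simp
  ring

/-- The relative operator `A^(-1/2) B A^(-1/2)`: the congruence by `A^(-1/2)` takes the pair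
`(A, B)` to `(1, relativeOperator A B)`. For singular `A` it is `0`, as `(msqrt A)⁻¹ = 0`. -/
noncomputable def relativeOperator (A B : Matrix n n ℂ) : Matrix n n ℂ :=
  (msqrt A)⁻¹ * B * (msqrt A)⁻¹

lemma msqrt_mul_relativeOperator_mul_msqrt (hA : A.PosDef) (B : Matrix n n ℂ) :
    msqrt A * relativeOperator A B * msqrt A = B := by
  have hdet := (isUnit_iff_isUnit_det _).1 (isUnit_msqrt hA)
  rw [relativeOperator, mul_assoc, nonsing_inv_mul_cancel_right _ _ hdet,
    mul_nonsing_inv_cancel_left _ _ hdet]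

lemma relativeOperator_smul_self (hA : A.PosDef) (c : ℝ) :
    relativeOperator A (c • A) = algebraMap ℝ (Matrix n n ℂ) c := by
  have hdet := (isUnit_iff_isUnit_det _).1 (isUnit_msqrt hA)
  calc relativeOperator A (c • A)
      = c • ((msqrt A)⁻¹ * (msqrt A * msqrt A) * (msqrt A)⁻¹) := by
        rw [relativeOperator, msqrt_mul_msqrt hA.posSemidef, mul_smul_comm, smul_mul_assoc]
    _ = algebraMap ℝ (Matrix n n ℂ) c := by
        rw [nonsing_inv_mul_cancel_left _ _ hdet, mul_nonsing_inv _ hdet,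
          Algebra.algebraMap_eq_smul_one]

lemma posDef_relativeOperator (hA : A.PosDef) (hB : B.PosDef) : (relativeOperator A B).PosDef := by
  have hconj := (IsUnit.posDef_star_left_conjugate_iff (posDef_msqrt hA).inv.isUnit).2 hB
  rwa [star_eq_conjTranspose, (isHermitian_msqrt A).inv.eq] at hconj

lemma relativeOperator_mono (A : Matrix n n ℂ) {B C : Matrix n n ℂ} (hBC : B ≤ C) :
    relativeOperator A B ≤ relativeOperator A C :=
  IsSelfAdjoint.conjugate_le_conjugate hBC (isHermitian_msqrt A).inv

lemma spectrum_relativeOperator_subset_Icc (hA : A.PosDef) (hB : B.IsHermitian) {s t : ℝ}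
    (hsA : s • A ≤ B) (htA : B ≤ t • A) : spectrum ℝ (relativeOperator A B) ⊆ Icc s t := by
  have hsa : IsSelfAdjoint (relativeOperator A B) :=
    IsSelfAdjoint.conjugate_self hB (isHermitian_msqrt A).inv
  have hlo := relativeOperator_mono A hsA
  have hhi := relativeOperator_mono A htA
  rw [relativeOperator_smul_self hA] at hlo hhi
  exact fun x hx => ⟨(algebraMap_le_iff_le_spectrum).1 hlo x hx,
    (le_algebraMap_iff_spectrum_le).1 hhi x hx⟩

/-- The operator mean `A^(1/2) f(A^(-1/2) B A^(-1/2)) A^(1/2)` of Kubo and Ando with representing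
function `f`. -/
noncomputable def kuboAndoMean (f : ℝ → ℝ) (A B : Matrix n n ℂ) : Matrix n n ℂ :=
  msqrt A * cfc f (relativeOperator A B) * msqrt A

lemma gmean_eq_kuboAndoMean (A B : Matrix n n ℂ) : gmean A B = kuboAndoMean Real.sqrt A B :=
  rfl

lemma hmean_eq_kuboAndoMean (hA : A.PosDef) (hB : B.PosDef) :
    hmean A B = kuboAndoMean (fun x => 2 * x / (1 + x)) A B := by
  have hR := isUnit_msqrt hA
  calc hmean A B
      = hmean (msqrt A * 1 * msqrt A) (msqrt A * relativeOperator A B * msqrt A) := by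
        rw [mul_one, msqrt_mul_msqrt hA.posSemidef, msqrt_mul_relativeOperator_mul_msqrt hA]
    _ = msqrt A * hmean 1 (relativeOperator A B) * msqrt A := hmean_mul_mul hR hR
    _ = kuboAndoMean (fun x => 2 * x / (1 + x)) A B := by
        rw [hmean_one_left (posDef_relativeOperator hA hB), kuboAndoMean]

lemma posDef_kuboAndoMean {f : ℝ → ℝ} (hf : ∀ x, 0 < x → 0 < f x) (hA : A.PosDef)
    (hB : B.PosDef) : (kuboAndoMean f A B).PosDef := by
  have hX := posDef_relativeOperator hA hB
  have hconj := (IsUnit.posDef_star_left_conjugate_iff (isUnit_msqrt hA)).2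
    (posDef_cfc (f := f) hX.1 fun x hx => hf x (hX.isStrictlyPositive.spectrum_pos hx))
  rwa [star_eq_conjTranspose, (isHermitian_msqrt A).eq] at hconj

lemma smul_kuboAndoMean (c : ℝ) (f : ℝ → ℝ) (A B : Matrix n n ℂ) :
    c • kuboAndoMean f A B = kuboAndoMean (fun x => c * f x) A B := by
  rw [kuboAndoMean, kuboAndoMean, cfc_const_mul _ _ _ (continuousOn_real_spectrum _ _),
    mul_smul_comm, smul_mul_assoc]

lemma kuboAndoMean_le_kuboAndoMean {f₁ f₂ : ℝ → ℝ}
    (hf : ∀ x ∈ spectrum ℝ (relativeOperator A B), f₁ x ≤ f₂ x) :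
    kuboAndoMean f₁ A B ≤ kuboAndoMean f₂ A B :=
  IsSelfAdjoint.conjugate_le_conjugate
    (cfc_mono hf (continuousOn_real_spectrum _ _) (continuousOn_real_spectrum _ _))
    (isHermitian_msqrt A)

lemma posDef_gmean (hA : A.PosDef) (hB : B.PosDef) : (gmean A B).PosDef :=
  posDef_kuboAndoMean (fun _ => Real.sqrt_pos.2) hA hB

lemma posDef_hmean (hA : A.PosDef) (hB : B.PosDef) : (hmean A B).PosDef :=
  ((hA.inv.add hB.inv).smul (by norm_num : (0 : ℝ) < 2⁻¹)).inv

lemma gmean_le_smul_hmean (hA : A.PosDef) (hB : B.PosDef) {s t : ℝ} (hs : 0 ≤ s)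
    (hst : 1 ≤ s * t) (hsA : s • A ≤ B) (htA : B ≤ t • A) :
    gmean A B ≤ ((√s + √t) / 2) • hmean A B := by
  rw [gmean_eq_kuboAndoMean, hmean_eq_kuboAndoMean hA hB, smul_kuboAndoMean]
  exact kuboAndoMean_le_kuboAndoMean fun x hx =>
    sqrt_le_mul_two_mul_div_one_add hs hst
      (spectrum_relativeOperator_subset_Icc hA hB.1 hsA htA hx)

end Means

theorem antitone_harm_le_geom {n : Type} [Fintype n] [DecidableEq n]
    (g : ℝ → ℝ) (hg : OpAntitone g)
    (A B : Matrix n n ℂ) (hA : A.PosDef) (hB : B.PosDef)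
    (s t : ℝ) (hs : 0 < s) (hst : s ≤ t) (h1 : 1 ≤ s * t)
    (hsA : LoewnerLE (s • A) B) (htA : LoewnerLE B (t • A)) :
    LoewnerLE ((2 / (Real.sqrt s + Real.sqrt t)) • cfc g (hmean A B))
      (cfc g (gmean A B)) := by
  rw [loewnerLE_iff_le] at hsA htA ⊢
  set l : ℝ := (√s + √t) / 2 with hl
  have hmeans : gmean A B ≤ l • hmean A B := gmean_le_smul_hmean hA hB hs.le h1 hsA htA
  calc (2 / (√s + √t)) • cfc g (hmean A B)
      = l⁻¹ • cfc g (hmean A B) := by rw [hl, inv_div]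
    _ ≤ cfc g (l • hmean A B) :=
        hg.inv_smul_cfc_le_cfc_smul (posDef_hmean hA hB) (one_le_sqrt_add_sqrt_div_two hs.le h1)
    _ ≤ cfc g (gmean A B) := hg.cfc_le_cfc (posDef_gmean hA hB) hmeans
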